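/- Let M₁, M₂ be positive integers and ℓ₁, ℓ₂ integers with 1 ≤ ℓ₁ ≤ M₁, 1 ≤ ℓ₂ ≤ M₂. For T ≥ 10 set y = T^{3/4}. Then for every ε > 0, ∫_{T/2}^T S₁(x) dx = (1/(32π⁴)) · C₄(ℓ₁/M₁, ℓ₂/M₂) · ∫_{T/2}^T x dx + O(T^{2−1/8+ε}), where the implied constant depends at most on M₁, M₂ and ε. -/

import Mathlib

open Real MeasureTheory Finset
open scoped Classical

noncomputable section

/-- The phase `h ℓ₂/M₂ + r ℓ₁/M₁ + 1/8` attached to a factorization pair `p = (h, r)`. -/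
def phase (M₁ M₂ ℓ₁ ℓ₂ : ℕ) (p : ℕ × ℕ) : ℝ :=
  ((p.1 : ℝ) * ℓ₂) / M₂ + ((p.2 : ℝ) * ℓ₁) / M₁ + 1/8

/-- The series `s_{4;v}` with sign pattern `(1, e₂, e₃, e₄)`. -/
def s4 (M₁ M₂ ℓ₁ ℓ₂ : ℕ) (e₂ e₃ e₄ : ℝ) : ℝ :=
  ∑' q : ℕ × ℕ × ℕ × ℕ,
    if 0 < q.1 ∧ 0 < q.2.1 ∧ 0 < q.2.2.1 ∧ 0 < q.2.2.2 ∧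
        Real.sqrt q.1 + e₂ * Real.sqrt q.2.1 + e₃ * Real.sqrt q.2.2.1
          + e₄ * Real.sqrt q.2.2.2 = 0 then
      ((q.1 : ℝ) * q.2.1 * q.2.2.1 * q.2.2.2) ^ (-(3:ℝ)/4) *
        ∑ p₁ ∈ Nat.divisorsAntidiagonal q.1, ∑ p₂ ∈ Nat.divisorsAntidiagonal q.2.1,
        ∑ p₃ ∈ Nat.divisorsAntidiagonal q.2.2.1, ∑ p₄ ∈ Nat.divisorsAntidiagonal q.2.2.2,
          Real.cos (2 * π * (phase M₁ M₂ ℓ₁ ℓ₂ p₁ + e₂ * phase M₁ M₂ ℓ₁ ℓ₂ p₂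
            + e₃ * phase M₁ M₂ ℓ₁ ℓ₂ p₃ + e₄ * phase M₁ M₂ ℓ₁ ℓ₂ p₄))
    else 0

/-- `C₄(ℓ₁/M₁, ℓ₂/M₂) = Σ_{v=1}^3 binom(3,v) s_{4;v}`. -/
def C4 (M₁ M₂ ℓ₁ ℓ₂ : ℕ) : ℝ :=
  3 * s4 M₁ M₂ ℓ₁ ℓ₂ 1 1 (-1) + 3 * s4 M₁ M₂ ℓ₁ ℓ₂ 1 (-1) (-1)
    + s4 M₁ M₂ ℓ₁ ℓ₂ (-1) (-1) (-1)

/-- `α(n, i) = √n₁ + (−1)^{i₁}√n₂ + (−1)^{i₂}√n₃ + (−1)^{i₃}√n₄`. -/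
def alphaNI (n : ℕ × ℕ × ℕ × ℕ) (i : Fin 2 × Fin 2 × Fin 2) : ℝ :=
  Real.sqrt n.1 + (-1 : ℝ) ^ (i.1 : ℕ) * Real.sqrt n.2.1
    + (-1 : ℝ) ^ (i.2.1 : ℕ) * Real.sqrt n.2.2.1
    + (-1 : ℝ) ^ (i.2.2 : ℕ) * Real.sqrt n.2.2.2

/-- `β(h, r, i)`, for the factorizations `n_j = h_j r_j` encoded as pairs `p_j`. -/
def betaSum (M₁ M₂ ℓ₁ ℓ₂ : ℕ) (i : Fin 2 × Fin 2 × Fin 2) (p₁ p₂ p₃ p₄ : ℕ × ℕ) : ℝ :=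
  phase M₁ M₂ ℓ₁ ℓ₂ p₁ + (-1 : ℝ) ^ (i.1 : ℕ) * phase M₁ M₂ ℓ₁ ℓ₂ p₂
    + (-1 : ℝ) ^ (i.2.1 : ℕ) * phase M₁ M₂ ℓ₁ ℓ₂ p₃
    + (-1 : ℝ) ^ (i.2.2 : ℕ) * phase M₁ M₂ ℓ₁ ℓ₂ p₄

/-- The "diagonal" part `S₁(x)` of `R₀(x;y)⁴`. -/
def S1 (M₁ M₂ ℓ₁ ℓ₂ : ℕ) (y x : ℝ) : ℝ :=
  x / (32 * π ^ 4) * ∑ i : Fin 2 × Fin 2 × Fin 2,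
    ∑ n₁ ∈ Finset.Icc 1 ⌊y⌋₊, ∑ n₂ ∈ Finset.Icc 1 ⌊y⌋₊,
    ∑ n₃ ∈ Finset.Icc 1 ⌊y⌋₊, ∑ n₄ ∈ Finset.Icc 1 ⌊y⌋₊,
      if alphaNI (n₁, n₂, n₃, n₄) i = 0 then
        ((n₁ : ℝ) * n₂ * n₃ * n₄) ^ (-(3:ℝ)/4) *
          ∑ p₁ ∈ Nat.divisorsAntidiagonal n₁, ∑ p₂ ∈ Nat.divisorsAntidiagonal n₂,
          ∑ p₃ ∈ Nat.divisorsAntidiagonal n₃, ∑ p₄ ∈ Nat.divisorsAntidiagonal n₄,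
            Real.cos (2 * π * betaSum M₁ M₂ ℓ₁ ℓ₂ i p₁ p₂ p₃ p₄)
      else 0

/-- The "off-diagonal" part `S₂(x)` of `R₀(x;y)⁴`. -/
def S2 (M₁ M₂ ℓ₁ ℓ₂ : ℕ) (y x : ℝ) : ℝ :=
  x / (32 * π ^ 4) * ∑ i : Fin 2 × Fin 2 × Fin 2,
    ∑ n₁ ∈ Finset.Icc 1 ⌊y⌋₊, ∑ n₂ ∈ Finset.Icc 1 ⌊y⌋₊,
    ∑ n₃ ∈ Finset.Icc 1 ⌊y⌋₊, ∑ n₄ ∈ Finset.Icc 1 ⌊y⌋₊,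
      if alphaNI (n₁, n₂, n₃, n₄) i ≠ 0 then
        ((n₁ : ℝ) * n₂ * n₃ * n₄) ^ (-(3:ℝ)/4) *
          ∑ p₁ ∈ Nat.divisorsAntidiagonal n₁, ∑ p₂ ∈ Nat.divisorsAntidiagonal n₂,
          ∑ p₃ ∈ Nat.divisorsAntidiagonal n₃, ∑ p₄ ∈ Nat.divisorsAntidiagonal n₄,
            Real.cos (4 * π * alphaNI (n₁, n₂, n₃, n₄) i * Real.sqrt x
              - 2 * π * betaSum M₁ M₂ ℓ₁ ℓ₂ i p₁ p₂ p₃ p₄)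
      else 0

/-!
If a signed sum of `√n₁, …, √n₄` vanishes, then the `n_j` are equal in pairs or are all of the form
`t ^ 2 * m` with a common `m`. Hence `∑ (n₁n₂n₃n₄) ^ s` over the solutions converges for `s < -1/2`,
which by the divisor bound leaves room to spare in the series for `C₄`, where the exponent is
`-3/4`. The square root of the largest `n_j` is at most the sum of the other three, so `n_j` is at
most nine times the product of the others, and `n₁n₂n₃n₄ ≥ y ^ 2 / 9` as soon as some `n_j > y`.
Truncating the series at `y` thus costs `O(y ^ (-θ))` for every `θ < 1/2`. As `S₁(x)` is
`x / (32π⁴)` times the series truncated at `y = T ^ (3/4)`, the integral is known up to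
`O(T ^ (2 - κ))` for every `κ < 3/8`.
-/

/-! ### The divisor bound -/

lemma natCast_add_one_le_mul_two_rpow {δ : ℝ} (hδ : 0 < δ) (k : ℕ) :
    (k : ℝ) + 1 ≤ (1 + 1 / (δ * Real.log 2)) * 2 ^ (δ * k) := by
  have hexp : 1 + δ * k * Real.log 2 ≤ (2 : ℝ) ^ (δ * k) := by
    rw [Real.rpow_def_of_pos two_pos]
    linarith [Real.add_one_le_exp (Real.log 2 * (δ * k))]
  calc (k : ℝ) + 1
      ≤ 1 + δ * k * Real.log 2 + 1 / (δ * Real.log 2) + k := by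
        have : 0 ≤ δ * k * Real.log 2 + 1 / (δ * Real.log 2) := by positivity
        linarith
    _ = (1 + 1 / (δ * Real.log 2)) * (1 + δ * k * Real.log 2) := by field_simp; ring
    _ ≤ _ := by gcongr

lemma natCast_add_one_le_rpow_mul {x δ : ℝ} (hx : 0 ≤ x) (h : 2 ≤ x ^ δ) (k : ℕ) :
    (k : ℝ) + 1 ≤ x ^ (δ * k) :=
  calc (k : ℝ) + 1 ≤ 2 ^ k := by exact_mod_cast Nat.lt_two_pow_self
    _ ≤ (x ^ δ) ^ k := by gcongr
    _ = x ^ (δ * k) := (Real.rpow_mul_natCast hx δ k).symm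

lemma natCast_rpow_eq_prod_primeFactors {n : ℕ} (hn : n ≠ 0) (δ : ℝ) :
    (n : ℝ) ^ δ = ∏ p ∈ n.primeFactors, (p : ℝ) ^ (δ * n.factorization p) := by
  conv_lhs => rw [← Nat.prod_factorization_pow_eq_self hn, Finsupp.prod]
  push_cast
  rw [← Real.finsetProd_rpow _ _ fun p _ => by positivity]
  refine Finset.prod_congr (Nat.support_factorization n) fun p _ => ?_
  rw [Real.rpow_mul_natCast p.cast_nonneg, Real.rpow_pow_comm p.cast_nonneg]

/- Only the primes `p` with `p ^ δ < 2` contribute a factor larger than `p ^ (δ * k)`, and there are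
boundedly many of them. -/
theorem exists_card_divisors_le_mul_rpow {δ : ℝ} (hδ : 0 < δ) :
    ∃ K > 0, ∀ n : ℕ, (#n.divisors : ℝ) ≤ K * (n : ℝ) ^ δ := by
  set A : ℝ := 1 + 1 / (δ * Real.log 2)
  have hA : 1 ≤ A := le_add_of_nonneg_right (by positivity)
  obtain ⟨N, hN⟩ := exists_nat_ge ((2 : ℝ) ^ δ⁻¹)
  have hsmall (p k : ℕ) (hp : 2 ≤ p) : (k : ℝ) + 1 ≤ A * (p : ℝ) ^ (δ * k) :=
    (natCast_add_one_le_mul_two_rpow hδ k).trans (by gcongr; exact_mod_cast hp)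
  have hlarge (p k : ℕ) (hp : N ≤ p) : (k : ℝ) + 1 ≤ (p : ℝ) ^ (δ * k) := by
    refine natCast_add_one_le_rpow_mul p.cast_nonneg ?_ k
    exact (Real.rpow_inv_le_iff_of_pos two_pos.le p.cast_nonneg hδ).mp
      (hN.trans (by exact_mod_cast hp))
  refine ⟨A ^ N, by positivity, fun n => ?_⟩
  obtain rfl | hn := eq_or_ne n 0
  · simp [Real.zero_rpow hδ.ne']
  have hcard : #{p ∈ n.primeFactors | p < N} ≤ N := by
    refine (Finset.card_le_card fun p hp => ?_).trans_eq (Finset.card_range N)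
    exact Finset.mem_range.mpr (Finset.mem_filter.mp hp).2
  rw [Nat.card_divisors hn, natCast_rpow_eq_prod_primeFactors hn]
  push_cast
  calc ∏ p ∈ n.primeFactors, ((n.factorization p : ℝ) + 1)
      ≤ ∏ p ∈ n.primeFactors,
          ((if p < N then A else 1) * (p : ℝ) ^ (δ * n.factorization p)) := by
        refine Finset.prod_le_prod (fun p _ => by positivity) fun p hp => ?_
        split_ifs with hpN
        · exact hsmall p _ (Nat.prime_of_mem_primeFactors hp).two_le
        · simpa using hlarge p _ (not_lt.mp hpN)
    _ = A ^ #{p ∈ n.primeFactors | p < N} *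
          ∏ p ∈ n.primeFactors, (p : ℝ) ^ (δ * n.factorization p) := by
        rw [Finset.prod_mul_distrib, ← Finset.prod_filter, Finset.prod_const]
    _ ≤ _ := by gcongr

/-! ### Vanishing signed sums of four square roots -/

lemma mul_mul_eq_of_signed_sum_eq_zero {R : Type*} [CommRing R] {x₁ x₂ x₃ x₄ e₂ e₃ e₄ : R}
    (h₂ : e₂ ^ 2 = 1) (h₃ : e₃ ^ 2 = 1) (h₄ : e₄ ^ 2 = 1)
    (h : x₁ + e₂ * x₂ + e₃ * x₃ + e₄ * x₄ = 0) :
    4 * (x₃ ^ 2 + x₄ ^ 2 - x₁ ^ 2 - x₂ ^ 2) * (e₂ * (x₁ * x₂)) =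
      4 * (x₁ ^ 2 * x₂ ^ 2) + (x₃ ^ 2 + x₄ ^ 2 - x₁ ^ 2 - x₂ ^ 2) ^ 2
        - 4 * (x₃ ^ 2 * x₄ ^ 2) := by
  set c := x₃ ^ 2 + x₄ ^ 2 - x₁ ^ 2 - x₂ ^ 2 with hc
  have hsq : (x₁ + e₂ * x₂) ^ 2 = (e₃ * x₃ + e₄ * x₄) ^ 2 := by
    rw [show x₁ + e₂ * x₂ = -(e₃ * x₃ + e₄ * x₄) by linear_combination h, neg_sq]
  have hlin : 2 * e₂ * (x₁ * x₂) - c = 2 * e₃ * e₄ * (x₃ * x₄) := by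
    linear_combination hsq - x₂ ^ 2 * h₂ + x₃ ^ 2 * h₃ + x₄ ^ 2 * h₄ - hc
  have hlin_sq := congrArg (· ^ 2) hlin
  simp only [mul_pow, sub_sq, h₂, h₃, h₄] at hlin_sq
  linear_combination -hlin_sq

lemma eq_and_eq_or_isSquare_mul {a b c d : ℕ} {e₂ e₃ e₄ : ℝ}
    (h₂ : e₂ ^ 2 = 1) (h₃ : e₃ ^ 2 = 1) (h₄ : e₄ ^ 2 = 1)
    (h : √a + e₂ * √b + e₃ * √c + e₄ * √d = 0) :
    (a = c ∧ b = d) ∨ (a = d ∧ b = c) ∨ IsSquare (a * b) := by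
  have key := mul_mul_eq_of_signed_sum_eq_zero h₂ h₃ h₄ h
  simp only [Real.sq_sqrt (Nat.cast_nonneg _)] at key
  by_cases hsum : (a : ℤ) + b = c + d
  · have hsumR : (a : ℝ) + b = c + d := by exact_mod_cast hsum
    have hprod : (a : ℤ) * b = c * d := by
      have : (a : ℝ) * b = c * d := by
        rw [show (c : ℝ) + d - a - b = 0 by linarith] at key
        linarith
      exact_mod_cast this
    have : ((a : ℤ) - c) * (a - d) = 0 := by linear_combination a * hsum - hprod
    rcases mul_eq_zero.mp this with h | h
    · left; omega
    · right; left; omega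
  · right; right
    have hne : (c : ℝ) + d - a - b ≠ 0 := by
      contrapose! hsum
      have : (a : ℝ) + b = c + d := by linarith
      exact_mod_cast this
    have hab : (a * b : ℝ) = ((4 * (a * b) + (c + d - a - b) ^ 2 - 4 * (c * d)) /
        (4 * (c + d - a - b))) ^ 2 := by
      rw [← key, mul_div_cancel_left₀ _ (by positivity), mul_pow, mul_pow, h₂,
        Real.sq_sqrt a.cast_nonneg, Real.sq_sqrt b.cast_nonneg, one_mul]
    have habQ : ((a * b : ℕ) : ℚ) = ((4 * (a * b) + (c + d - a - b) ^ 2 - 4 * (c * d)) /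
        (4 * (c + d - a - b))) ^ 2 := by exact_mod_cast hab
    rw [← Rat.isSquare_natCast_iff, habQ]
    exact IsSquare.sq _

lemma exists_sq_mul_eq_of_isSquare_sq_mul_mul {m b n : ℕ} (hm : Squarefree m) (hb : b ≠ 0)
    (h : IsSquare (b ^ 2 * m * n)) : ∃ t, t ^ 2 * m = n := by
  obtain ⟨r, hr⟩ := h
  obtain ⟨s, rfl⟩ : b ∣ r :=
    (Nat.pow_dvd_pow_iff two_ne_zero).mp ⟨m * n, by rw [sq r, ← hr, mul_assoc]⟩
  have hmn : m * n = s ^ 2 :=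
    Nat.eq_of_mul_eq_mul_left (pow_pos hb.bot_lt 2) (by linarith)
  obtain ⟨t, rfl⟩ : m ∣ s := (hm.dvd_pow_iff_dvd two_ne_zero).mp ⟨n, hmn.symm⟩
  exact ⟨t, Nat.eq_of_mul_eq_mul_left hm.ne_zero.bot_lt (by rw [hmn]; ring)⟩

/-- `q` consists of positive integers with `√q₁ + e₂√q₂ + e₃√q₃ + e₄√q₄ = 0`, the range of
summation of `s4`. -/
def IsSqrtSolution (e₂ e₃ e₄ : ℝ) (q : ℕ × ℕ × ℕ × ℕ) : Prop :=
  0 < q.1 ∧ 0 < q.2.1 ∧ 0 < q.2.2.1 ∧ 0 < q.2.2.2 ∧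
    √q.1 + e₂ * √q.2.1 + e₃ * √q.2.2.1 + e₄ * √q.2.2.2 = 0

/-- The quadruples whose entries are equal in pairs. -/
def pairedQuadruples : Set (ℕ × ℕ × ℕ × ℕ) :=
  Set.range (fun p : ℕ × ℕ => (p.1, p.1, p.2, p.2)) ∪
    (Set.range (fun p : ℕ × ℕ => (p.1, p.2, p.1, p.2)) ∪
      Set.range (fun p : ℕ × ℕ => (p.1, p.2, p.2, p.1)))

/-- The quadruples `(t₁²m, t₂²m, t₃²m, t₄²m)`, whose square roots are all multiples of `√m`. -/
def commensurableQuadruples : Set (ℕ × ℕ × ℕ × ℕ) :=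
  Set.range fun p : ℕ × ℕ × ℕ × ℕ × ℕ =>
    (p.2.1 ^ 2 * p.1, p.2.2.1 ^ 2 * p.1, p.2.2.2.1 ^ 2 * p.1, p.2.2.2.2 ^ 2 * p.1)

lemma mem_commensurableQuadruples {a b c d : ℕ} (ha : a ≠ 0)
    (hb : IsSquare (a * b)) (hc : IsSquare (a * c)) (hd : IsSquare (a * d)) :
    (a, b, c, d) ∈ commensurableQuadruples := by
  obtain ⟨m, t₁, rfl, hm⟩ := Nat.sq_mul_squarefree a
  have ht₁ : t₁ ≠ 0 := by rintro rfl; simp at ha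
  obtain ⟨t₂, rfl⟩ := exists_sq_mul_eq_of_isSquare_sq_mul_mul hm ht₁ hb
  obtain ⟨t₃, rfl⟩ := exists_sq_mul_eq_of_isSquare_sq_mul_mul hm ht₁ hc
  obtain ⟨t₄, rfl⟩ := exists_sq_mul_eq_of_isSquare_sq_mul_mul hm ht₁ hd
  exact ⟨(m, t₁, t₂, t₃, t₄), rfl⟩

theorem IsSqrtSolution.mem_paired_union_commensurable {e₂ e₃ e₄ : ℝ} {q : ℕ × ℕ × ℕ × ℕ}
    (h₂ : e₂ ^ 2 = 1) (h₃ : e₃ ^ 2 = 1) (h₄ : e₄ ^ 2 = 1) (hq : IsSqrtSolution e₂ e₃ e₄ q) :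
    q ∈ pairedQuadruples ∪ commensurableQuadruples := by
  obtain ⟨a, b, c, d⟩ := q
  obtain ⟨ha, -, -, -, h⟩ := hq
  dsimp only at ha h
  rcases eq_and_eq_or_isSquare_mul h₂ h₃ h₄ h with ⟨rfl, rfl⟩ | ⟨rfl, rfl⟩ | hb
  · exact .inl (.inr (.inl ⟨(a, b), rfl⟩))
  · exact .inl (.inr (.inr ⟨(a, b), rfl⟩))
  rcases eq_and_eq_or_isSquare_mul h₃ h₂ h₄ (by linarith : √a + e₃ * √c + e₂ * √b + e₄ * √d = 0)
    with ⟨rfl, rfl⟩ | ⟨rfl, rfl⟩ | hc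
  · exact .inl (.inl ⟨(a, c), rfl⟩)
  · exact .inl (.inr (.inr ⟨(a, c), rfl⟩))
  rcases eq_and_eq_or_isSquare_mul h₄ h₂ h₃ (by linarith : √a + e₄ * √d + e₂ * √b + e₃ * √c = 0)
    with ⟨rfl, rfl⟩ | ⟨rfl, rfl⟩ | hd
  · exact .inl (.inl ⟨(a, d), rfl⟩)
  · exact .inl (.inr (.inl ⟨(a, d), rfl⟩))
  exact .inr (mem_commensurableQuadruples ha.ne' hb hc hd)

/-- The product `q₁q₂q₃q₄` as a real number. -/
def quadrupleProd (q : ℕ × ℕ × ℕ × ℕ) : ℝ :=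
  (q.1 : ℝ) * q.2.1 * q.2.2.1 * q.2.2.2

lemma quadrupleProd_nonneg (q : ℕ × ℕ × ℕ × ℕ) : 0 ≤ quadrupleProd q := by
  unfold quadrupleProd; positivity

lemma IsSqrtSolution.quadrupleProd_pos {e₂ e₃ e₄ : ℝ} {q : ℕ × ℕ × ℕ × ℕ}
    (hq : IsSqrtSolution e₂ e₃ e₄ q) : 0 < quadrupleProd q := by
  obtain ⟨h₁, h₂, h₃, h₄, -⟩ := hq
  unfold quadrupleProd; positivity

lemma quadrupleProd_rpow (a b c d : ℕ) (s : ℝ) :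
    quadrupleProd (a, b, c, d) ^ s = (a : ℝ) ^ s * (b : ℝ) ^ s * (c : ℝ) ^ s * (d : ℝ) ^ s := by
  simp only [quadrupleProd]
  rw [Real.mul_rpow (by positivity) (by positivity), Real.mul_rpow (by positivity) (by positivity),
    Real.mul_rpow (by positivity) (by positivity)]

/-- The box `1 ≤ q₁, q₂, q₃, q₄ ≤ y`. -/
def quadrupleBox (y : ℝ) : Finset (ℕ × ℕ × ℕ × ℕ) :=
  Finset.Icc 1 ⌊y⌋₊ ×ˢ Finset.Icc 1 ⌊y⌋₊ ×ˢ Finset.Icc 1 ⌊y⌋₊ ×ˢ Finset.Icc 1 ⌊y⌋₊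

lemma le_nine_mul_of_sqrt_le {a b c d : ℝ} (hb : 1 ≤ b) (hc : 1 ≤ c) (hd : 1 ≤ d)
    (h : √a ≤ √b + √c + √d) : a ≤ 9 * (b * c * d) := by
  have hbc : 1 ≤ b * c := one_le_mul_of_one_le_of_one_le hb hc
  have hbcd : b * c ≤ b * c * d := le_mul_of_one_le_right (by positivity) hd
  have hb' : √b ≤ √(b * c * d) :=
    Real.sqrt_le_sqrt ((le_mul_of_one_le_right (by positivity) hc).trans hbcd)
  have hc' : √c ≤ √(b * c * d) :=
    Real.sqrt_le_sqrt ((le_mul_of_one_le_left (by positivity) hb).trans hbcd)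
  have hd' : √d ≤ √(b * c * d) := Real.sqrt_le_sqrt (le_mul_of_one_le_left (by positivity) hbc)
  have h9 : √(9 * (b * c * d)) = 3 * √(b * c * d) := by
    rw [Real.sqrt_mul (by norm_num), show (9 : ℝ) = 3 ^ 2 by norm_num, Real.sqrt_sq (by norm_num)]
  exact (Real.sqrt_le_sqrt_iff (by positivity)).mp (by linarith)

lemma le_add_add_of_signed_sum_eq_zero {x₁ x₂ x₃ x₄ e₂ e₃ e₄ : ℝ}
    (h₂ : e₂ ^ 2 = 1) (h₃ : e₃ ^ 2 = 1) (h₄ : e₄ ^ 2 = 1)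
    (hx₁ : 0 ≤ x₁) (hx₂ : 0 ≤ x₂) (hx₃ : 0 ≤ x₃) (hx₄ : 0 ≤ x₄)
    (h : x₁ + e₂ * x₂ + e₃ * x₃ + e₄ * x₄ = 0) :
    x₁ ≤ x₂ + x₃ + x₄ ∧ x₂ ≤ x₁ + x₃ + x₄ ∧ x₃ ≤ x₁ + x₂ + x₄ ∧ x₄ ≤ x₁ + x₂ + x₃ := by
  rcases sq_eq_one_iff.mp h₂ with rfl | rfl <;>
  rcases sq_eq_one_iff.mp h₃ with rfl | rfl <;>
  rcases sq_eq_one_iff.mp h₄ with rfl | rfl <;>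
  refine ⟨?_, ?_, ?_, ?_⟩ <;> linarith

lemma exists_lt_of_notMem_quadrupleBox {a b c d : ℕ} {y : ℝ} (ha : 0 < a) (hb : 0 < b)
    (hc : 0 < c) (hd : 0 < d) (h : (a, b, c, d) ∉ quadrupleBox y) :
    y < a ∨ y < b ∨ y < c ∨ y < d := by
  contrapose! h
  simp only [quadrupleBox, Finset.mem_product, Finset.mem_Icc]
  exact ⟨⟨ha, Nat.le_floor h.1⟩, ⟨hb, Nat.le_floor h.2.1⟩, ⟨hc, Nat.le_floor h.2.2.1⟩,
    ⟨hd, Nat.le_floor h.2.2.2⟩⟩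

lemma IsSqrtSolution.sq_le_nine_mul_quadrupleProd {e₂ e₃ e₄ y : ℝ} {q : ℕ × ℕ × ℕ × ℕ}
    (h₂ : e₂ ^ 2 = 1) (h₃ : e₃ ^ 2 = 1) (h₄ : e₄ ^ 2 = 1) (hq : IsSqrtSolution e₂ e₃ e₄ q)
    (hy : 0 ≤ y) (hqy : q ∉ quadrupleBox y) : y ^ 2 ≤ 9 * quadrupleProd q := by
  obtain ⟨a, b, c, d⟩ := q
  obtain ⟨ha, hb, hc, hd, h⟩ := hq
  dsimp only at ha hb hc hd h
  obtain ⟨hab, hba, hca, hda⟩ := le_add_add_of_signed_sum_eq_zero h₂ h₃ h₄ (Real.sqrt_nonneg _)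
    (Real.sqrt_nonneg _) (Real.sqrt_nonneg _) (Real.sqrt_nonneg _) h
  have hlarge := exists_lt_of_notMem_quadrupleBox ha hb hc hd hqy
  replace ha : (1 : ℝ) ≤ a := Nat.one_le_cast.mpr ha
  replace hb : (1 : ℝ) ≤ b := Nat.one_le_cast.mpr hb
  replace hc : (1 : ℝ) ≤ c := Nat.one_le_cast.mpr hc
  replace hd : (1 : ℝ) ≤ d := Nat.one_le_cast.mpr hd
  have hsq {n P : ℝ} (hyn : y < n) (hn : n ≤ 9 * P) : y ^ 2 ≤ 9 * (n * P) :=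
    calc y ^ 2 = y * y := sq y
      _ ≤ n * (9 * P) := mul_le_mul hyn.le (hyn.le.trans hn) hy (hy.trans hyn.le)
      _ = 9 * (n * P) := by ring
  have hprod : quadrupleProd (a, b, c, d) = a * b * c * d := rfl
  rcases hlarge with hya | hyb | hyc | hyd
  · linarith [hsq hya (le_nine_mul_of_sqrt_le hb hc hd hab)]
  · linarith [hsq hyb (le_nine_mul_of_sqrt_le ha hc hd hba)]
  · linarith [hsq hyc (le_nine_mul_of_sqrt_le ha hb hd hca)]
  · linarith [hsq hyd (le_nine_mul_of_sqrt_le ha hb hc hda)]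

/-! ### Summability over the solutions -/

lemma summable_indicator_range {α β : Type*} {f : β → ℝ} {g : α → β}
    (h : Summable fun a => f (g a)) : Summable ((Set.range g).indicator f) := by
  rw [← summable_subtype_iff_indicator]
  refine (h.comp_injective (Set.rangeSplitting_injective g)).congr fun b => ?_
  simp only [Function.comp_apply, Set.apply_rangeSplitting]

lemma summable_indicator_union {β : Type*} {f : β → ℝ} {s t : Set β} (hf : ∀ b, 0 ≤ f b)
    (hs : Summable (s.indicator f)) (ht : Summable (t.indicator f)) :
    Summable ((s ∪ t).indicator f) := by
  refine .of_nonneg_of_le (Set.indicator_nonneg fun b _ => hf b) (fun b => ?_) (hs.add ht)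
  by_cases hbs : b ∈ s <;> by_cases hbt : b ∈ t <;> simp [hbs, hbt, hf b]

lemma summable_natCast_rpow_pow {s : ℝ} {k : ℕ} (h : s * k < -1) :
    Summable fun n : ℕ => ((n : ℝ) ^ s) ^ k :=
  (Real.summable_nat_rpow.mpr h).congr fun n => Real.rpow_mul_natCast n.cast_nonneg s k

lemma summable_indicator_pairedQuadruples {s : ℝ} (hs : s < -1 / 2) :
    Summable (pairedQuadruples.indicator (quadrupleProd · ^ s)) := by
  have hsq : Summable fun n : ℕ => ((n : ℝ) ^ s) ^ 2 :=
    summable_natCast_rpow_pow (by push_cast; linarith)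
  have hpair : Summable fun p : ℕ × ℕ => ((p.1 : ℝ) ^ s) ^ 2 * ((p.2 : ℝ) ^ s) ^ 2 :=
    hsq.mul_of_nonneg hsq (fun n => by positivity) (fun n => by positivity)
  have hnonneg (q) : 0 ≤ quadrupleProd q ^ s := Real.rpow_nonneg (quadrupleProd_nonneg q) s
  refine summable_indicator_union hnonneg (summable_indicator_range ?_)
    (summable_indicator_union hnonneg (summable_indicator_range ?_)
      (summable_indicator_range ?_)) <;>
  · refine hpair.congr fun p => ?_
    rw [quadrupleProd_rpow]
    ring

lemma summable_indicator_commensurableQuadruples {s : ℝ} (hs : s < -1 / 2) :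
    Summable (commensurableQuadruples.indicator (quadrupleProd · ^ s)) := by
  have hsq : Summable fun n : ℕ => ((n : ℝ) ^ s) ^ 2 :=
    summable_natCast_rpow_pow (by push_cast; linarith)
  have hfourth : Summable fun n : ℕ => ((n : ℝ) ^ s) ^ 4 :=
    summable_natCast_rpow_pow (by push_cast; linarith)
  have hprod : Summable fun p : ℕ × ℕ × ℕ × ℕ × ℕ => ((p.1 : ℝ) ^ s) ^ 4 *
      (((p.2.1 : ℝ) ^ s) ^ 2 * (((p.2.2.1 : ℝ) ^ s) ^ 2 *
        (((p.2.2.2.1 : ℝ) ^ s) ^ 2 * ((p.2.2.2.2 : ℝ) ^ s) ^ 2))) := by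
    refine hfourth.mul_of_nonneg (hsq.mul_of_nonneg (hsq.mul_of_nonneg
      (hsq.mul_of_nonneg hsq ?_ ?_) ?_ ?_) ?_ ?_) ?_ ?_ <;> intro _ <;> positivity
  refine summable_indicator_range (hprod.congr fun p => ?_)
  have hrpow (t m : ℕ) : ((t ^ 2 * m : ℕ) : ℝ) ^ s = ((t : ℝ) ^ s) ^ 2 * (m : ℝ) ^ s := by
    push_cast
    rw [Real.mul_rpow (by positivity) (by positivity), Real.rpow_pow_comm t.cast_nonneg]
  rw [quadrupleProd_rpow, hrpow, hrpow, hrpow, hrpow]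
  ring

/-- The function `(q₁q₂q₃q₄) ^ s` supported on the paired and the commensurable quadruples. For `s`
slightly above `-3/4` it majorizes the terms of `s4`, up to a constant, for all signs at once. -/
def majorant (s : ℝ) : ℕ × ℕ × ℕ × ℕ → ℝ :=
  (pairedQuadruples ∪ commensurableQuadruples).indicator (quadrupleProd · ^ s)

lemma majorant_nonneg (s : ℝ) (q : ℕ × ℕ × ℕ × ℕ) : 0 ≤ majorant s q :=
  Set.indicator_nonneg (fun q _ => Real.rpow_nonneg (quadrupleProd_nonneg q) s) q

theorem summable_majorant {s : ℝ} (hs : s < -1 / 2) : Summable (majorant s) :=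
  summable_indicator_union (fun q => Real.rpow_nonneg (quadrupleProd_nonneg q) s)
    (summable_indicator_pairedQuadruples hs) (summable_indicator_commensurableQuadruples hs)

/-! ### The terms of the series -/

/-- The sum of `cos (2π (φ p₁ + e₂ φ p₂ + e₃ φ p₃ + e₄ φ p₄))` over all factorizations
`p_j = (h_j, r_j)` of the entries `q_j`, for an arbitrary phase function `φ`. -/
def factorizationCosSum (φ : ℕ × ℕ → ℝ) (e₂ e₃ e₄ : ℝ) (q : ℕ × ℕ × ℕ × ℕ) : ℝ :=
  ∑ p₁ ∈ q.1.divisorsAntidiagonal, ∑ p₂ ∈ q.2.1.divisorsAntidiagonal,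
    ∑ p₃ ∈ q.2.2.1.divisorsAntidiagonal, ∑ p₄ ∈ q.2.2.2.divisorsAntidiagonal,
      Real.cos (2 * π * (φ p₁ + e₂ * φ p₂ + e₃ * φ p₃ + e₄ * φ p₄))

/-- The term of the series `s4` at the quadruple `q`, for an arbitrary phase function `φ`. -/
def quadrupleTerm (φ : ℕ × ℕ → ℝ) (e₂ e₃ e₄ : ℝ) (q : ℕ × ℕ × ℕ × ℕ) : ℝ :=
  if IsSqrtSolution e₂ e₃ e₄ q then
    quadrupleProd q ^ (-(3 : ℝ) / 4) * factorizationCosSum φ e₂ e₃ e₄ q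
  else 0

lemma exists_abs_factorizationCosSum_le {δ : ℝ} (hδ : 0 < δ) :
    ∃ K > 0, ∀ (φ : ℕ × ℕ → ℝ) (e₂ e₃ e₄ : ℝ) (q : ℕ × ℕ × ℕ × ℕ),
      |factorizationCosSum φ e₂ e₃ e₄ q| ≤ K * quadrupleProd q ^ δ := by
  obtain ⟨K, hK, hdiv⟩ := exists_card_divisors_le_mul_rpow hδ
  refine ⟨K ^ 4, by positivity, fun φ e₂ e₃ e₄ ⟨a, b, c, d⟩ => ?_⟩
  have hcard (n : ℕ) : #n.divisorsAntidiagonal = #n.divisors := by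
    rw [← Nat.map_div_right_divisors, Finset.card_map]
  calc |factorizationCosSum φ e₂ e₃ e₄ (a, b, c, d)|
      ≤ ∑ _p₁ ∈ a.divisorsAntidiagonal, ∑ _p₂ ∈ b.divisorsAntidiagonal,
          ∑ _p₃ ∈ c.divisorsAntidiagonal, ∑ _p₄ ∈ d.divisorsAntidiagonal, (1 : ℝ) := by
        rw [factorizationCosSum, ← Real.norm_eq_abs]
        exact norm_sum_le_of_le _ fun _ _ => norm_sum_le_of_le _ fun _ _ =>
          norm_sum_le_of_le _ fun _ _ => norm_sum_le_of_le _ fun _ _ => Real.abs_cos_le_one _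
    _ = #a.divisors * (#b.divisors * (#c.divisors * #d.divisors)) := by
        simp only [Finset.sum_const, nsmul_eq_mul, mul_one, hcard]
    _ ≤ (K * (a : ℝ) ^ δ) * ((K * (b : ℝ) ^ δ) * ((K * (c : ℝ) ^ δ) * (K * (d : ℝ) ^ δ))) := by
        gcongr <;> exact hdiv _
    _ = K ^ 4 * quadrupleProd (a, b, c, d) ^ δ := by rw [quadrupleProd_rpow]; ring

lemma exists_abs_quadrupleTerm_le {δ : ℝ} (hδ : 0 < δ) :
    ∃ K > 0, ∀ (φ : ℕ × ℕ → ℝ) (e₂ e₃ e₄ : ℝ), e₂ ^ 2 = 1 → e₃ ^ 2 = 1 → e₄ ^ 2 = 1 → ∀ q,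
      |quadrupleTerm φ e₂ e₃ e₄ q| ≤ K * majorant (-3 / 4 + δ) q := by
  obtain ⟨K, hK, hcos⟩ := exists_abs_factorizationCosSum_le hδ
  refine ⟨K, hK, fun φ e₂ e₃ e₄ h₂ h₃ h₄ q => ?_⟩
  rw [quadrupleTerm]
  split_ifs with hq
  · rw [majorant, Set.indicator_of_mem (hq.mem_paired_union_commensurable h₂ h₃ h₄), abs_mul,
      abs_of_nonneg (Real.rpow_nonneg hq.quadrupleProd_pos.le _),
      Real.rpow_add hq.quadrupleProd_pos, mul_left_comm]
    exact mul_le_mul_of_nonneg_left (hcos φ e₂ e₃ e₄ q) (Real.rpow_nonneg hq.quadrupleProd_pos.le _)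
  · simpa using mul_nonneg hK.le (majorant_nonneg _ q)

lemma summable_quadrupleTerm (φ : ℕ × ℕ → ℝ) {e₂ e₃ e₄ : ℝ}
    (h₂ : e₂ ^ 2 = 1) (h₃ : e₃ ^ 2 = 1) (h₄ : e₄ ^ 2 = 1) :
    Summable (quadrupleTerm φ e₂ e₃ e₄) := by
  obtain ⟨K, -, hK⟩ := exists_abs_quadrupleTerm_le (δ := 1 / 8) (by norm_num)
  exact .of_norm_bounded ((summable_majorant (by norm_num)).mul_left K) (hK φ e₂ e₃ e₄ h₂ h₃ h₄)

lemma IsSqrtSolution.quadrupleProd_rpow_le {e₂ e₃ e₄ y θ : ℝ} {q : ℕ × ℕ × ℕ × ℕ}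
    (h₂ : e₂ ^ 2 = 1) (h₃ : e₃ ^ 2 = 1) (h₄ : e₄ ^ 2 = 1) (hq : IsSqrtSolution e₂ e₃ e₄ q)
    (hy : 0 < y) (hqy : q ∉ quadrupleBox y) (hθ : 0 ≤ θ) :
    quadrupleProd q ^ (-θ / 2) ≤ 3 ^ θ * y ^ (-θ) := by
  have hP : (y / 3) ^ 2 ≤ quadrupleProd q := by
    linarith [hq.sq_le_nine_mul_quadrupleProd h₂ h₃ h₄ hy.le hqy, div_pow y 3 2]
  calc quadrupleProd q ^ (-θ / 2) ≤ ((y / 3) ^ 2) ^ (-θ / 2) :=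
        Real.rpow_le_rpow_of_nonpos (by positivity) hP (by linarith)
    _ = (y / 3) ^ (-θ) := by
        rw [← Real.rpow_natCast, ← Real.rpow_mul (by positivity)]
        congr 1; push_cast; ring
    _ = 3 ^ θ * y ^ (-θ) := by
        rw [Real.div_rpow hy.le (by norm_num), Real.rpow_neg (x := 3) (by norm_num)]
        field_simp

lemma exists_abs_quadrupleTerm_le_of_notMem {θ : ℝ} (hθ₀ : 0 ≤ θ) (hθ : θ < 1 / 2) :
    ∃ K > 0, ∃ s < -1 / 2, ∀ (φ : ℕ × ℕ → ℝ) (e₂ e₃ e₄ : ℝ),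
      e₂ ^ 2 = 1 → e₃ ^ 2 = 1 → e₄ ^ 2 = 1 → ∀ y > 0, ∀ q ∉ quadrupleBox y,
        |quadrupleTerm φ e₂ e₃ e₄ q| ≤ K * y ^ (-θ) * majorant s q := by
  set δ : ℝ := (1 / 2 - θ) / 4 with hδ
  obtain ⟨K, hK, hterm⟩ := exists_abs_quadrupleTerm_le (δ := δ) (by linarith)
  refine ⟨K * 3 ^ θ, by positivity, -1 / 2 - δ, by linarith,
    fun φ e₂ e₃ e₄ h₂ h₃ h₄ y hy q hqy => ?_⟩
  have hM := majorant_nonneg (-1 / 2 - δ) q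
  by_cases hq : IsSqrtSolution e₂ e₃ e₄ q
  swap
  · rw [quadrupleTerm, if_neg hq, abs_zero]
    positivity
  have hmem := hq.mem_paired_union_commensurable h₂ h₃ h₄
  calc |quadrupleTerm φ e₂ e₃ e₄ q|
      ≤ K * majorant (-3 / 4 + δ) q := hterm φ e₂ e₃ e₄ h₂ h₃ h₄ q
    _ = K * (quadrupleProd q ^ (-θ / 2) * majorant (-1 / 2 - δ) q) := by
        rw [majorant, majorant, Set.indicator_of_mem hmem, Set.indicator_of_mem hmem,
          ← Real.rpow_add hq.quadrupleProd_pos]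
        congr 2
        rw [hδ]; ring
    _ ≤ K * (3 ^ θ * y ^ (-θ) * majorant (-1 / 2 - δ) q) := by
        gcongr
        exact hq.quadrupleProd_rpow_le h₂ h₃ h₄ hy hqy hθ₀
    _ = K * 3 ^ θ * y ^ (-θ) * majorant (-1 / 2 - δ) q := by ring

lemma abs_sum_sub_tsum_le {α : Type*} {f g : α → ℝ} (s : Finset α) (hf : Summable f)
    (hg : Summable g) (hg₀ : ∀ a, 0 ≤ g a) (h : ∀ a ∉ s, |f a| ≤ g a) :
    |∑ a ∈ s, f a - ∑' a, f a| ≤ ∑' a, g a := by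
  rw [abs_sub_comm, ← hf.sum_add_tsum_compl (s := s), add_sub_cancel_left]
  calc |∑' a : ↑(s : Set α)ᶜ, f a| ≤ ∑' a : ↑(s : Set α)ᶜ, g a :=
        tsum_of_norm_bounded (f := fun a : ↑(s : Set α)ᶜ => f a) (hg.subtype _).hasSum
          fun a => h a a.2
    _ ≤ ∑' a, g a := hg.tsum_subtype_le g _ hg₀

theorem exists_abs_sum_quadrupleBox_sub_tsum_le {θ : ℝ} (hθ₀ : 0 ≤ θ) (hθ : θ < 1 / 2) :
    ∃ K > 0, ∀ (φ : ℕ × ℕ → ℝ) (e₂ e₃ e₄ : ℝ), e₂ ^ 2 = 1 → e₃ ^ 2 = 1 → e₄ ^ 2 = 1 → ∀ y > 0,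
      |∑ q ∈ quadrupleBox y, quadrupleTerm φ e₂ e₃ e₄ q - ∑' q, quadrupleTerm φ e₂ e₃ e₄ q|
        ≤ K * y ^ (-θ) := by
  obtain ⟨K, hK, s, hs, htail⟩ := exists_abs_quadrupleTerm_le_of_notMem hθ₀ hθ
  have hM : 0 ≤ ∑' q, majorant s q := tsum_nonneg (majorant_nonneg s)
  refine ⟨K * (∑' q, majorant s q + 1), by positivity, fun φ e₂ e₃ e₄ h₂ h₃ h₄ y hy => ?_⟩
  calc _ ≤ ∑' q, K * y ^ (-θ) * majorant s q :=
        abs_sum_sub_tsum_le _ (summable_quadrupleTerm φ h₂ h₃ h₄)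
          ((summable_majorant hs).mul_left _)
          (fun q => mul_nonneg (by positivity) (majorant_nonneg s q))
          (htail φ e₂ e₃ e₄ h₂ h₃ h₄ y hy)
    _ = K * (∑' q, majorant s q) * y ^ (-θ) := by rw [tsum_mul_left]; ring
    _ ≤ K * (∑' q, majorant s q + 1) * y ^ (-θ) := by gcongr; linarith

/-! ### The constant `C4` and its truncations -/

lemma s4_eq_tsum_quadrupleTerm (M₁ M₂ ℓ₁ ℓ₂ : ℕ) (e₂ e₃ e₄ : ℝ) :
    s4 M₁ M₂ ℓ₁ ℓ₂ e₂ e₃ e₄ = ∑' q, quadrupleTerm (phase M₁ M₂ ℓ₁ ℓ₂) e₂ e₃ e₄ q :=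
  tsum_congr fun _ => if_congr Iff.rfl rfl rfl

lemma quadrupleTerm_swap₂₃ (φ : ℕ × ℕ → ℝ) (e₂ e₃ e₄ : ℝ) (a b c d : ℕ) :
    quadrupleTerm φ e₂ e₃ e₄ (a, b, c, d) = quadrupleTerm φ e₃ e₂ e₄ (a, c, b, d) := by
  refine if_congr ?_ ?_ rfl
  · simp only [IsSqrtSolution, add_right_comm _ (e₂ * √b)]
    tauto
  · rw [quadrupleProd, quadrupleProd, factorizationCosSum, factorizationCosSum]
    simp only [mul_right_comm _ (b : ℝ), add_right_comm _ (e₂ * _)]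
    congr 1
    exact Finset.sum_congr rfl fun _ _ => Finset.sum_comm

lemma quadrupleTerm_swap₃₄ (φ : ℕ × ℕ → ℝ) (e₂ e₃ e₄ : ℝ) (a b c d : ℕ) :
    quadrupleTerm φ e₂ e₃ e₄ (a, b, c, d) = quadrupleTerm φ e₂ e₄ e₃ (a, b, d, c) := by
  refine if_congr ?_ ?_ rfl
  · simp only [IsSqrtSolution, add_right_comm _ (e₃ * √c)]
    tauto
  · rw [quadrupleProd, quadrupleProd, factorizationCosSum, factorizationCosSum]
    simp only [mul_right_comm _ (c : ℝ), add_right_comm _ (e₃ * _)]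
    congr 1
    exact Finset.sum_congr rfl fun _ _ => Finset.sum_congr rfl fun _ _ => Finset.sum_comm

lemma s4_swap₂₃ (M₁ M₂ ℓ₁ ℓ₂ : ℕ) (e₂ e₃ e₄ : ℝ) :
    s4 M₁ M₂ ℓ₁ ℓ₂ e₂ e₃ e₄ = s4 M₁ M₂ ℓ₁ ℓ₂ e₃ e₂ e₄ := by
  let σ : Equiv.Perm (ℕ × ℕ × ℕ × ℕ) :=
    Function.Involutive.toPerm (fun (a, b, c, d) => (a, c, b, d)) fun _ => rfl
  rw [s4_eq_tsum_quadrupleTerm, s4_eq_tsum_quadrupleTerm, ← σ.tsum_eq]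
  exact tsum_congr fun (a, b, c, d) => quadrupleTerm_swap₂₃ _ e₂ e₃ e₄ a c b d

lemma s4_swap₃₄ (M₁ M₂ ℓ₁ ℓ₂ : ℕ) (e₂ e₃ e₄ : ℝ) :
    s4 M₁ M₂ ℓ₁ ℓ₂ e₂ e₃ e₄ = s4 M₁ M₂ ℓ₁ ℓ₂ e₂ e₄ e₃ := by
  let σ : Equiv.Perm (ℕ × ℕ × ℕ × ℕ) :=
    Function.Involutive.toPerm (fun (a, b, c, d) => (a, b, d, c)) fun _ => rfl
  rw [s4_eq_tsum_quadrupleTerm, s4_eq_tsum_quadrupleTerm, ← σ.tsum_eq]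
  exact tsum_congr fun (a, b, c, d) => quadrupleTerm_swap₃₄ _ e₂ e₃ e₄ a b d c

lemma not_isSqrtSolution_one_one_one (q : ℕ × ℕ × ℕ × ℕ) : ¬ IsSqrtSolution 1 1 1 q := by
  rintro ⟨h₁, -, -, -, h⟩
  have : 0 < √(q.1 : ℝ) := Real.sqrt_pos.mpr (by exact_mod_cast h₁)
  linarith [Real.sqrt_nonneg q.2.1, Real.sqrt_nonneg q.2.2.1, Real.sqrt_nonneg q.2.2.2]

lemma s4_one_one_one (M₁ M₂ ℓ₁ ℓ₂ : ℕ) : s4 M₁ M₂ ℓ₁ ℓ₂ 1 1 1 = 0 := by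
  simp only [s4_eq_tsum_quadrupleTerm, quadrupleTerm, not_isSqrtSolution_one_one_one, if_false,
    tsum_zero]

lemma C4_eq_sum_s4 (M₁ M₂ ℓ₁ ℓ₂ : ℕ) :
    C4 M₁ M₂ ℓ₁ ℓ₂ = ∑ i : Fin 2 × Fin 2 × Fin 2,
      s4 M₁ M₂ ℓ₁ ℓ₂ ((-1) ^ (i.1 : ℕ)) ((-1) ^ (i.2.1 : ℕ)) ((-1) ^ (i.2.2 : ℕ)) := by
  simp only [Fintype.sum_prod_type, Fin.sum_univ_two, Fin.val_zero, Fin.val_one, pow_zero, pow_one]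
  rw [C4, s4_one_one_one, s4_swap₃₄ _ _ _ _ 1 (-1) 1, s4_swap₂₃ _ _ _ _ (-1) 1 1,
    s4_swap₃₄ _ _ _ _ 1 (-1) 1, s4_swap₂₃ _ _ _ _ (-1) 1 (-1), s4_swap₃₄ _ _ _ _ (-1) (-1) 1,
    s4_swap₂₃ _ _ _ _ (-1) 1 (-1)]
  ring

/-- The truncation of `C4` to quadruples with entries at most `y`, written as a sum over all sign
patterns. -/
def truncatedC4 (M₁ M₂ ℓ₁ ℓ₂ : ℕ) (y : ℝ) : ℝ :=
  ∑ i : Fin 2 × Fin 2 × Fin 2, ∑ q ∈ quadrupleBox y,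
    quadrupleTerm (phase M₁ M₂ ℓ₁ ℓ₂) ((-1) ^ (i.1 : ℕ)) ((-1) ^ (i.2.1 : ℕ)) ((-1) ^ (i.2.2 : ℕ)) q

lemma S1_eq_mul_truncatedC4 (M₁ M₂ ℓ₁ ℓ₂ : ℕ) (y x : ℝ) :
    S1 M₁ M₂ ℓ₁ ℓ₂ y x = x / (32 * π ^ 4) * truncatedC4 M₁ M₂ ℓ₁ ℓ₂ y := by
  simp only [S1, truncatedC4, quadrupleBox, Finset.sum_product]
  congr 1
  refine Finset.sum_congr rfl fun i _ => Finset.sum_congr rfl fun a ha =>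
    Finset.sum_congr rfl fun b hb => Finset.sum_congr rfl fun c hc =>
      Finset.sum_congr rfl fun d hd => if_congr ?_ rfl rfl
  rw [Finset.mem_Icc] at ha hb hc hd
  exact ⟨fun h => ⟨ha.1, hb.1, hc.1, hd.1, h⟩, fun h => h.2.2.2.2⟩

lemma exists_abs_truncatedC4_sub_C4_le {θ : ℝ} (hθ₀ : 0 ≤ θ) (hθ : θ < 1 / 2) :
    ∃ K > 0, ∀ (M₁ M₂ ℓ₁ ℓ₂ : ℕ), ∀ y > 0,
      |truncatedC4 M₁ M₂ ℓ₁ ℓ₂ y - C4 M₁ M₂ ℓ₁ ℓ₂| ≤ K * y ^ (-θ) := by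
  obtain ⟨K, hK, h⟩ := exists_abs_sum_quadrupleBox_sub_tsum_le hθ₀ hθ
  refine ⟨8 * K, by positivity, fun M₁ M₂ ℓ₁ ℓ₂ y hy => ?_⟩
  have hsign (j : Fin 2) : ((-1 : ℝ) ^ (j : ℕ)) ^ 2 = 1 := by rw [pow_right_comm]; norm_num
  calc |truncatedC4 M₁ M₂ ℓ₁ ℓ₂ y - C4 M₁ M₂ ℓ₁ ℓ₂|
      ≤ ∑ _i : Fin 2 × Fin 2 × Fin 2, K * y ^ (-θ) := by
        rw [truncatedC4, C4_eq_sum_s4, ← Finset.sum_sub_distrib, ← Real.norm_eq_abs]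
        refine norm_sum_le_of_le _ fun i _ => ?_
        rw [s4_eq_tsum_quadrupleTerm]
        exact h _ _ _ _ (hsign _) (hsign _) (hsign _) y hy
    _ = 8 * K * y ^ (-θ) := by
        simp only [Finset.sum_const, Finset.card_univ, Fintype.card_prod, Fintype.card_fin,
          nsmul_eq_mul]
        push_cast; ring

lemma integral_S1 (M₁ M₂ ℓ₁ ℓ₂ : ℕ) (y a b : ℝ) :
    ∫ x in a..b, S1 M₁ M₂ ℓ₁ ℓ₂ y x =
      1 / (32 * π ^ 4) * truncatedC4 M₁ M₂ ℓ₁ ℓ₂ y * ∫ x in a..b, x := by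
  rw [← intervalIntegral.integral_const_mul]
  refine intervalIntegral.integral_congr fun x _ => ?_
  simp only [S1_eq_mul_truncatedC4]
  ring

theorem S1_integral_asymptotic_general {κ : ℝ} (hκ₀ : 0 ≤ κ) (hκ : κ < 3 / 8) :
    ∃ C > 0, ∀ M₁ M₂ ℓ₁ ℓ₂ : ℕ, 0 < M₁ → 0 < M₂ → ∀ T > 0,
      |(∫ x in (T/2)..T, S1 M₁ M₂ ℓ₁ ℓ₂ (T ^ ((3:ℝ)/4)) x)
          - 1 / (32 * π ^ 4) * C4 M₁ M₂ ℓ₁ ℓ₂ * ∫ x in (T/2)..T, x|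
        ≤ C * T ^ (2 - κ) := by
  obtain ⟨K, hK, hC4⟩ := exists_abs_truncatedC4_sub_C4_le (θ := 4 / 3 * κ) (by positivity)
    (by linarith)
  refine ⟨1 / (32 * π ^ 4) * K * (3 / 8), by positivity, fun M₁ M₂ ℓ₁ ℓ₂ _ _ T hT => ?_⟩
  have hlen : ∫ x in (T/2)..T, x = 3 / 8 * T ^ 2 := by rw [integral_id]; ring
  have hpow : (T ^ ((3:ℝ)/4)) ^ (-(4 / 3 * κ)) * T ^ 2 = T ^ (2 - κ) := by
    rw [← Real.rpow_mul hT.le, ← Real.rpow_natCast T 2, ← Real.rpow_add hT]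
    congr 1; push_cast; ring
  rw [integral_S1, ← sub_mul, ← mul_sub, hlen, abs_mul, abs_mul,
    abs_of_pos (a := 1 / (32 * π ^ 4)) (by positivity),
    abs_of_pos (a := 3 / 8 * T ^ 2) (by positivity)]
  calc _ ≤ 1 / (32 * π ^ 4) * (K * (T ^ ((3:ℝ)/4)) ^ (-(4 / 3 * κ))) * (3 / 8 * T ^ 2) := by
        gcongr
        exact hC4 M₁ M₂ ℓ₁ ℓ₂ _ (by positivity)
    _ = _ := by rw [← hpow]; ring

theorem S1_integral_asymptotic
    (M₁ M₂ ℓ₁ ℓ₂ : ℕ) (hM₁ : 0 < M₁) (hM₂ : 0 < M₂)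
    (hℓ₁ : 1 ≤ ℓ₁) (hℓ₁' : ℓ₁ ≤ M₁) (hℓ₂ : 1 ≤ ℓ₂) (hℓ₂' : ℓ₂ ≤ M₂)
    (ε : ℝ) (hε : 0 < ε) :
    ∃ C > 0, ∀ T : ℝ, 10 ≤ T →
      |(∫ x in (T/2)..T, S1 M₁ M₂ ℓ₁ ℓ₂ (T ^ ((3:ℝ)/4)) x)
          - 1 / (32 * π ^ 4) * C4 M₁ M₂ ℓ₁ ℓ₂ * ∫ x in (T/2)..T, x|
        ≤ C * T ^ (2 - 1/8 + ε) := by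
  obtain ⟨C, hC, h⟩ := S1_integral_asymptotic_general (κ := 1/8) (by norm_num) (by norm_num)
  exact ⟨C, hC, fun T hT => (h M₁ M₂ ℓ₁ ℓ₂ hM₁ hM₂ T (by linarith)).trans (by gcongr <;> linarith)⟩
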